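/- arXiv:math/0211045 — 6 statements merged into one kernel-verified Lean document; each statement's English description precedes it below -/
import Mathlib

section
/- Let a ∈ ℝ, let f : ℝ → ℝ be infinitely differentiable on a neighborhood of a, and assume f(a) ≠ 0 and f^{(1)}(a) ≠ 0. Then for every m ∈ ℕ there exists a unique polynomial p ∈ ℝ[X] of degree exactly m such that for every natural number i > m, the m-th derivative at a of the function x ↦ (f(x))^i equals (f(a))^i · p(i). -/
open Polynomial

/-!
Near `a` the function `f` does not vanish, so `(f ^ i)' = i * f ^ i * (f' / f)` with `f' / f`
smooth. Leibniz' rule turns this into a recursion (`iteratedDeriv_pow_succ`): the `(m + 1)`-st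
derivative of `f ^ i` at `a` is `i` times a combination, with coefficients independent of `i`, of
the derivatives of order at most `m`. Hence the polynomials
`p₀ = 1`, `pₘ₊₁ = X * ∑_{k ≤ m} C(m, k) (f' / f)^{(m - k)}(a) pₖ` work, and the summand `k = m`
dominates because `(f' / f)(a) ≠ 0`, so the degree goes up by exactly one at each step.
Uniqueness holds because two such polynomials agree at infinitely many points.
-/

/-- Leibniz' rule applied to `(f ^ i)' = i * f ^ i * (f' / f)`. -/
theorem iteratedDeriv_pow_succ (a : ℝ) (f : ℝ → ℝ) (hf : ContDiffAt ℝ (⊤ : ℕ∞) f a)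
    (hfa : f a ≠ 0) (m i : ℕ) :
    iteratedDeriv (m + 1) (fun x => (f x) ^ i) a =
      (i : ℝ) * ∑ k ∈ Finset.range (m + 1), (m.choose k : ℝ) *
        iteratedDeriv k (fun x => (f x) ^ i) a *
        iteratedDeriv (m - k) (fun x => deriv f x / f x) a := by
  have hf' : ContDiffAt ℝ (⊤ : ℕ∞) (deriv f) a := hf.derivWithin (by simp)
  have hg : ContDiffAt ℝ (⊤ : ℕ∞) (fun x => deriv f x / f x) a := hf'.div hf hfa
  have hle : ((m : ℕ∞) : WithTop ℕ∞) ≤ ((⊤ : ℕ∞) : WithTop ℕ∞) := by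
    exact_mod_cast le_top
  have hdiff : ∀ᶠ x in nhds a, DifferentiableAt ℝ f x := by
    have h1 : ContDiffAt ℝ 1 f a := hf.of_le (by exact_mod_cast le_top)
    filter_upwards [h1.eventually (by simp)] with x hx
    exact hx.differentiableAt (by simp)
  have hne : ∀ᶠ x in nhds a, f x ≠ 0 := hf.continuousAt.eventually_ne hfa
  have hev : deriv (fun x => (f x) ^ i) =ᶠ[nhds a]
      fun x => (i : ℝ) * ((f x) ^ i * (deriv f x / f x)) := by
    filter_upwards [hdiff, hne] with x hx hx0
    rw [(hx.hasDerivAt.fun_pow i).deriv]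
    cases i with
    | zero => simp
    | succ j =>
      simp only [Nat.add_sub_cancel]
      field_simp
      ring
  rw [iteratedDeriv_succ', hev.iteratedDeriv_eq, iteratedDeriv_const_mul_field,
    iteratedDeriv_fun_mul ((hf.pow i).of_le hle) (hg.of_le hle)]

theorem exists_poly_iteratedDeriv_pow (a : ℝ) (f : ℝ → ℝ) (hf : ContDiffAt ℝ (⊤ : ℕ∞) f a)
    (hfa : f a ≠ 0) (hfa' : deriv f a ≠ 0) (m : ℕ) :
    ∃ p : Polynomial ℝ, p.degree = (m : ℕ) ∧
      ∀ i : ℕ, iteratedDeriv m (fun x => (f x) ^ i) a = (f a) ^ i * p.eval (i : ℝ) := by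
  induction m using Nat.strong_induction_on with
  | _ m ih =>
    cases m with
    | zero => exact ⟨1, by simp, by simp⟩
    | succ m =>
      -- `q k` is the polynomial for order `k ≤ m`; it is unconstrained for larger `k`.
      choose! q hqdeg hq using ih
      set c : ℕ → ℝ := fun k =>
        (m.choose k : ℝ) * iteratedDeriv (m - k) (fun x => deriv f x / f x) a with hc
      have hcm : c m ≠ 0 := by simp [hc, hfa, hfa']
      refine ⟨X * ∑ k ∈ Finset.range (m + 1), C (c k) * q k, ?_, fun i => ?_⟩
      · have htop : (C (c m) * q m).degree = (m : ℕ) := by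
          rw [degree_C_mul hcm, hqdeg m (by omega)]
        have hlow : (∑ k ∈ Finset.range m, C (c k) * q k).degree < (m : ℕ) := by
          refine (degree_sum_le _ _).trans_lt
            ((Finset.sup_lt_iff (WithBot.bot_lt_coe m)).2 fun k hk => ?_)
          have hk := Finset.mem_range.1 hk
          rw [C_mul']
          refine (degree_smul_le _ _).trans_lt ?_
          rw [hqdeg k (by omega)]
          exact WithBot.coe_lt_coe.2 hk
        rw [Finset.sum_range_succ, degree_mul, degree_X,
          degree_add_eq_right_of_degree_lt (by rw [htop]; exact hlow), htop]
        push_cast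
        exact add_comm _ _
      · rw [iteratedDeriv_pow_succ a f hf hfa, eval_mul, eval_X, eval_finsetSum,
          mul_left_comm (f a ^ i)]
        congr 1
        rw [Finset.mul_sum]
        refine Finset.sum_congr rfl fun k hk => ?_
        rw [hq k (Finset.mem_range.1 hk) i, eval_mul, eval_C]
        simp only [hc]
        ring

/-- Lemma (derivatives of powers of a smooth function): if `f` is infinitely
differentiable near `a` with `f a ≠ 0` and `f' a ≠ 0`, then for every `m` there is a
unique polynomial `p` of degree exactly `m` with
`(d^m/dx^m) (f x)^i |_{x=a} = (f a)^i * p(i)` for all `i > m`. -/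
theorem derivative_of_power_is_poly
    (a : ℝ) (f : ℝ → ℝ) (hf : ContDiffAt ℝ (⊤ : ℕ∞) f a)
    (hfa : f a ≠ 0) (hfa' : deriv f a ≠ 0) (m : ℕ) :
    ∃! p : Polynomial ℝ, p.degree = (m : ℕ) ∧
      ∀ i : ℕ, m < i →
        iteratedDeriv m (fun x => (f x) ^ i) a = (f a) ^ i * p.eval (i : ℝ) := by
  obtain ⟨p, hdeg, hp⟩ := exists_poly_iteratedDeriv_pow a f hf hfa hfa' m
  refine ⟨p, ⟨hdeg, fun i _ => hp i⟩, fun q ⟨_, hq⟩ => ?_⟩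
  refine eq_of_infinite_eval_eq q p
    (((Set.Ioi_infinite m).image Nat.cast_injective.injOn).mono ?_)
  rintro _ ⟨i, hi, rfl⟩
  exact mul_left_cancel₀ (pow_ne_zero i hfa) ((hq i hi).symm.trans (hp i))
end

section
/- Let g : ℝ → ℝ be infinitely differentiable on a neighborhood of a ∈ ℝ with g^{(1)}(a) ≠ 0, and let f : ℝ → ℝ be infinitely differentiable on a neighborhood of g(a). Assume f(g(a)) ≠ 0, f(g(a)) ≠ 1, and f^{(1)}(g(a)) ≠ 0. Then for every n ∈ ℕ there is no polynomial q ∈ ℝ[X] and no N ∈ ℕ such that for all natural numbers i ≥ N, the n-th derivative at a of the function x ↦ (f(g(x)))^i equals q(i). -/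
/-!
Put `h = f ∘ g`, `c = h a`, `b = h' a ≠ 0` and `D k i = (h ^ i)^{(k)}(a)`. The Leibniz rule for
`h ^ (i + 1) = h ^ i * h` expresses `T (D k)`, where `(T u) i = u (i + 1) - c * u i`, as a linear
combination of the `D j` with `j < k`, in which `D (k - 1)` has coefficient `k * b`. Hence
`T ^ k (D k) = (i ↦ k! * b ^ k * c ^ i)`, a sequence without zeros, while
`T ^ (k + 1) (D k) = 0` (`shiftSub_pow_eq`).

If `D n i = q i` for large `i`, then the polynomial version of `T ^ (n + 1)` kills `q`, as it
produces a polynomial with infinitely many roots. For `c ≠ 1` the polynomial version of `T` is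
injective, since it multiplies leading coefficients by `1 - c`; so `q = 0`. Then `D n`, and with
it `T ^ n (D n)`, vanishes for large `i`, which is a contradiction.
-/

open Polynomial

/-- The operator `E - c` on real sequences, where `E` is the shift. -/
noncomputable def shiftSub (c : ℝ) : Module.End ℝ (ℕ → ℝ) where
  toFun u := fun i => u (i + 1) - c * u i
  map_add' u v := by ext i; simp only [Pi.add_apply]; ring
  map_smul' r u := by ext i; simp only [Pi.smul_apply, smul_eq_mul, RingHom.id_apply]; ring

/-- The operator `p(X) ↦ p(X + 1) - c * p(X)` on polynomials, the counterpart of `shiftSub c`. -/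
noncomputable def polyShiftSub (c : ℝ) : Module.End ℝ ℝ[X] :=
  Polynomial.taylor 1 - c • LinearMap.id

lemma shiftSub_apply (c : ℝ) (u : ℕ → ℝ) (i : ℕ) :
    shiftSub c u i = u (i + 1) - c * u i := rfl

lemma polyShiftSub_apply (c : ℝ) (p : ℝ[X]) :
    polyShiftSub c p = Polynomial.taylor 1 p - c • p := rfl

lemma polyShiftSub_eq_zero {c : ℝ} (hc : c ≠ 1) {p : ℝ[X]} (h : polyShiftSub c p = 0) :
    p = 0 := by
  rw [polyShiftSub_apply, sub_eq_zero] at h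
  have h1 : p.leadingCoeff = c * p.leadingCoeff := by
    have := congrArg (fun r => Polynomial.coeff r p.natDegree) h
    simpa only [Polynomial.coeff_taylor_natDegree, Polynomial.coeff_smul, smul_eq_mul,
      Polynomial.coeff_natDegree] using this
  have h2 : (1 - c) * p.leadingCoeff = 0 := by linarith
  rcases mul_eq_zero.1 h2 with h3 | h3
  · exact absurd (by linarith) hc
  · exact Polynomial.leadingCoeff_eq_zero.1 h3

lemma polyShiftSub_pow_eq_zero {c : ℝ} (hc : c ≠ 1) (m : ℕ) {p : ℝ[X]}
    (h : (polyShiftSub c ^ m) p = 0) : p = 0 := by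
  induction m with
  | zero => simpa using h
  | succ m ih =>
    rw [pow_succ', Module.End.mul_apply] at h
    exact ih (polyShiftSub_eq_zero hc h)

lemma shiftSub_pow_eval (c : ℝ) {u : ℕ → ℝ} {p : ℝ[X]} {N : ℕ}
    (h : ∀ i, N ≤ i → u i = p.eval (i : ℝ)) (m : ℕ) :
    ∀ i, N ≤ i → (shiftSub c ^ m) u i = ((polyShiftSub c ^ m) p).eval (i : ℝ) := by
  induction m with
  | zero => simpa using h
  | succ m ih =>
    intro i hi
    rw [pow_succ', pow_succ', Module.End.mul_apply, Module.End.mul_apply, shiftSub_apply,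
      polyShiftSub_apply, ih i hi, ih (i + 1) (by omega)]
    simp [Polynomial.taylor_eval]

/-- The sequence `i ↦ (h ^ i)^{(n)}(a)`. -/
noncomputable def powDeriv (h : ℝ → ℝ) (a : ℝ) (n : ℕ) : ℕ → ℝ :=
  fun i => iteratedDeriv n (fun x => h x ^ i) a

/-- The Leibniz rule for `h ^ (i + 1) = h ^ i * h`; the term with `k = n` is absorbed by
`shiftSub`. -/
lemma shiftSub_powDeriv {h : ℝ → ℝ} {a : ℝ} (hh : ContDiffAt ℝ (⊤ : ℕ∞) h a) (n : ℕ) :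
    shiftSub (h a) (powDeriv h a n) =
      ∑ k ∈ Finset.range n, ((n.choose k : ℝ) * iteratedDeriv (n - k) h a) • powDeriv h a k := by
  ext i
  have hn : ContDiffAt ℝ n h a := hh.of_le (by exact_mod_cast le_top)
  have e : (fun x => h x ^ (i + 1)) = (fun x => h x ^ i) * h := by
    ext x; simp [pow_succ]
  rw [shiftSub_apply, Finset.sum_apply]
  simp only [powDeriv, Pi.smul_apply, smul_eq_mul]
  rw [e, iteratedDeriv_mul (hn.pow i) hn, Finset.sum_range_succ]
  simp only [Nat.choose_self, Nat.sub_self, iteratedDeriv_zero, Nat.cast_one, one_mul]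
  rw [mul_comm (h a), add_sub_cancel_right]
  exact Finset.sum_congr rfl fun k _ => by ring

lemma shiftSub_pow_eq_zero_of_lt {c r : ℝ} {u : ℕ → ℝ} {n m : ℕ}
    (hu : (shiftSub c ^ n) u = fun i => r * c ^ i) (hm : n < m) : (shiftSub c ^ m) u = 0 := by
  obtain ⟨d, rfl⟩ := Nat.exists_eq_add_of_lt hm
  have h1 : (shiftSub c ^ (n + 1)) u = 0 := by
    rw [pow_succ', Module.End.mul_apply, hu]
    ext i
    simp only [shiftSub_apply, Pi.zero_apply]
    ring
  rw [show n + d + 1 = d + (n + 1) by ring, pow_add, Module.End.mul_apply, h1, map_zero]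

lemma shiftSub_pow_eq {h : ℝ → ℝ} {a : ℝ} (hh : ContDiffAt ℝ (⊤ : ℕ∞) h a) (n : ℕ) :
    (shiftSub (h a) ^ n) (powDeriv h a n) =
      fun i => ((n.factorial : ℝ) * deriv h a ^ n) * h a ^ i := by
  induction n using Nat.strong_induction_on with
  | _ n ih =>
    cases n with
    | zero => ext i; simp [powDeriv]
    | succ n =>
      rw [pow_succ, Module.End.mul_apply, shiftSub_powDeriv hh, map_sum, Finset.sum_range_succ,
        Finset.sum_eq_zero, zero_add, map_smul, ih n (by omega)]
      · ext i
        simp only [Pi.smul_apply, smul_eq_mul, Nat.choose_succ_self_right, Nat.add_sub_cancel_left,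
          iteratedDeriv_one, Nat.factorial_succ]
        push_cast
        ring
      · intro k hk
        have hk := Finset.mem_range.1 hk
        rw [map_smul, shiftSub_pow_eq_zero_of_lt (ih k (by omega)) hk, smul_zero]

/-- Change-of-variables theorem (analytic core): if `g` is smooth near `a` with
`g' a ≠ 0`, `f` is smooth near `g a`, `f (g a) ≠ 0, 1` and `f' (g a) ≠ 0`, then for
each `n` the sequence `i ↦ (d^n/dx^n) (f (g x))^i |_{x=a}` does not have polynomial
growth. -/
theorem deriv_comp_power_not_poly_growth
    (a : ℝ) (g f : ℝ → ℝ)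
    (hg : ContDiffAt ℝ (⊤ : ℕ∞) g a) (hg' : deriv g a ≠ 0)
    (hf : ContDiffAt ℝ (⊤ : ℕ∞) f (g a))
    (hfa0 : f (g a) ≠ 0) (hfa1 : f (g a) ≠ 1) (hf' : deriv f (g a) ≠ 0) (n : ℕ) :
    ¬ ∃ (q : Polynomial ℝ) (N : ℕ), ∀ i : ℕ, N ≤ i →
        iteratedDeriv n (fun x => (f (g x)) ^ i) a = q.eval (i : ℝ) := by
  rintro ⟨q, N, hq⟩
  have hh : ContDiffAt ℝ (⊤ : ℕ∞) (f ∘ g) a := hf.comp a hg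
  have hb : deriv (f ∘ g) a ≠ 0 := by
    rw [deriv_comp a (hf.differentiableAt (by simp)) (hg.differentiableAt (by simp))]
    exact mul_ne_zero hf' hg'
  have key := shiftSub_pow_eq hh n
  have hev := shiftSub_pow_eval (f (g a)) (u := powDeriv (f ∘ g) a n) hq
  have hz : (polyShiftSub (f (g a)) ^ (n + 1)) q = 0 := by
    refine Polynomial.eq_zero_of_infinite_isRoot _ (Set.Infinite.mono ?_
      ((Set.Ici_infinite N).image (f := ((↑) : ℕ → ℝ)) Nat.cast_injective.injOn))
    rintro _ ⟨i, hi, rfl⟩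
    have h0 := congrFun (shiftSub_pow_eq_zero_of_lt key (Nat.lt_succ_self n)) i
    exact (hev (n + 1) i hi).symm.trans h0
  have hq0 : q = 0 := polyShiftSub_pow_eq_zero hfa1 _ hz
  have h1 := hev n N le_rfl
  rw [hq0, map_zero, Polynomial.eval_zero] at h1
  have h2 := (congrFun key N).symm.trans h1
  exact mul_ne_zero (mul_ne_zero (by exact_mod_cast n.factorial_ne_zero) (pow_ne_zero n hb))
    (pow_ne_zero N hfa0) h2
end

section
/- Let (a,b) ∈ ℂ², let g : ℂ × ℂ → ℂ be analytic on a neighborhood of (a,b), and assume g(a,b) ≠ 0, g(a,b) ≠ 1, g^{(1,0)}(a,b) ≠ 0 and g^{(0,1)}(a,b) ≠ 0. Then for all m, n ∈ ℕ there exists a polynomial p ∈ ℂ[X] of degree exactly m+n such that for every natural number i > m+n, the mixed partial derivative of order (m,n) at (a,b) of the function (x,y) ↦ (g(x,y))^i equals (g(a,b))^i · p(i). -/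
/-!
Since `g` does not vanish near `(a,b)`, a directional derivative `∂_v` satisfies
`∂_v (g^i * c) = g^i * (∂_v c + i * (∂_v g / g) * c)`. Hence every iterated derivative of `g^i` has
the form `g^i * ∑ k ≤ N, c k * i^k` with coefficients `c k` analytic near `(a,b)` and independent
of `i`, where each differentiation raises `N` by one and multiplies the leading coefficient by
`∂_v g / g` (`PowForm.dirDeriv`). After `m` derivatives in `x` and `n` in `y` the leading
coefficient at `(a,b)` is `(g_x / g)^m * (g_y / g)^n ≠ 0`, so the degree in `i` is exactly `m + n`.
Iterated one-variable derivatives along the coordinate axes are iterated directional derivatives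
because `g^i` is analytic (`iteratedDeriv_comp_line`).
-/

open Polynomial

/-- The derivative of `f` in the direction `v`, as a function of the base point. -/
noncomputable def dirDeriv (v : ℂ × ℂ) (f : ℂ × ℂ → ℂ) : ℂ × ℂ → ℂ := fun z => fderiv ℂ f z v

lemma AnalyticAt.dirDeriv {f : ℂ × ℂ → ℂ} {z : ℂ × ℂ} (hf : AnalyticAt ℂ f z) (v : ℂ × ℂ) :
    AnalyticAt ℂ (dirDeriv v f) z :=
  ((ContinuousLinearMap.apply ℂ ℂ v).analyticAt _).comp hf.fderiv

lemma AnalyticAt.dirDeriv_iterate {f : ℂ × ℂ → ℂ} {z : ℂ × ℂ} (hf : AnalyticAt ℂ f z)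
    (v : ℂ × ℂ) (n : ℕ) : AnalyticAt ℂ ((_root_.dirDeriv v)^[n] f) z := by
  induction n generalizing f with
  | zero => exact hf
  | succ n ih => exact ih (hf.dirDeriv v)

/-- Restricting to a line `l` with constant velocity `v` turns iterated directional derivatives
into iterated one-variable derivatives. -/
lemma iteratedDeriv_comp_line {l : ℂ → ℂ × ℂ} {v : ℂ × ℂ} (hl : ∀ t, HasDerivAt l v t)
    {f : ℂ × ℂ → ℂ} {t : ℂ} (hf : AnalyticAt ℂ f (l t)) (n : ℕ) :
    iteratedDeriv n (fun s => f (l s)) t = (dirDeriv v)^[n] f (l t) := by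
  induction n generalizing f with
  | zero => simp
  | succ n ih =>
    rw [iteratedDeriv_succ', Function.iterate_succ_apply, ← ih (hf.dirDeriv v)]
    apply Filter.EventuallyEq.iteratedDeriv_eq
    filter_upwards [(hl t).continuousAt.eventually hf.eventually_analyticAt] with s hs
    exact (hs.differentiableAt.hasFDerivAt.comp_hasDerivAt s (hl s)).deriv

/-- The family `F i` agrees near `z₀` with `g^i` times a polynomial in `i` of degree exactly `N` at
`z₀`, whose coefficients `c k` are analytic functions at `z₀`, set to zero for `k > N`. The equality holds near `z₀`, not
just at `z₀`, so that it can be differentiated. -/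
def PowForm (g : ℂ × ℂ → ℂ) (z₀ : ℂ × ℂ) (N : ℕ) (F : ℕ → ℂ × ℂ → ℂ) : Prop :=
  ∃ c : ℕ → ℂ × ℂ → ℂ, (∀ k, AnalyticAt ℂ (c k) z₀) ∧ (∀ k, N < k → c k = 0) ∧ c N z₀ ≠ 0 ∧
    ∀ i : ℕ, F i =ᶠ[nhds z₀] fun z => g z ^ i * ∑ k ∈ Finset.range (N + 1), c k z * (i : ℂ) ^ k

lemma PowForm.dirDeriv {g : ℂ × ℂ → ℂ} {z₀ : ℂ × ℂ} {N : ℕ} {F : ℕ → ℂ × ℂ → ℂ}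
    (hF : PowForm g z₀ N F) (hg : AnalyticAt ℂ g z₀) (h0 : g z₀ ≠ 0) {v : ℂ × ℂ}
    (hv : dirDeriv v g z₀ ≠ 0) : PowForm g z₀ (N + 1) (fun i => dirDeriv v (F i)) := by
  obtain ⟨c, hc, hcN, hne, hFc⟩ := hF
  have hu : AnalyticAt ℂ (fun z => _root_.dirDeriv v g z / g z) z₀ := (hg.dirDeriv v).div hg h0
  have hzero : _root_.dirDeriv v (0 : ℂ × ℂ → ℂ) = 0 := by
    funext z; simp [_root_.dirDeriv]
  refine ⟨fun k => match k with
    | 0 => _root_.dirDeriv v (c 0)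
    | k + 1 => fun z => _root_.dirDeriv v (c (k + 1)) z + _root_.dirDeriv v g z / g z * c k z,
    ?_, ?_, ?_, ?_⟩
  · rintro (_ | k)
    · exact (hc 0).dirDeriv v
    · exact ((hc (k + 1)).dirDeriv v).add (hu.mul (hc k))
  · rintro (_ | k) hk
    · omega
    · funext z
      simp [hcN (k + 1) (by omega), hcN k (by omega), hzero]
  · simp [hcN (N + 1) (by omega), hzero, hne, hv, h0]
  · intro i
    have hall : ∀ᶠ z in nhds z₀, ∀ k ∈ Finset.range (N + 1), AnalyticAt ℂ (c k) z :=
      (Finset.eventually_all _).2 fun k _ => (hc k).eventually_analyticAt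
    filter_upwards [(hFc i).fderiv (𝕜 := ℂ), hall, hg.eventually_analyticAt,
      hg.continuousAt.eventually_ne h0] with z hz hcz hgz hgne
    have hS : HasFDerivAt (fun z => ∑ k ∈ Finset.range (N + 1), c k z * (i : ℂ) ^ k)
        (∑ k ∈ Finset.range (N + 1), (i : ℂ) ^ k • fderiv ℂ (c k) z) z :=
      HasFDerivAt.fun_sum fun k hk => (hcz k hk).differentiableAt.hasFDerivAt.mul_const _
    have hP := (hgz.differentiableAt.hasFDerivAt.pow i).fun_mul hS
    have hpow : (i : ℂ) * g z ^ (i - 1) = i * (g z ^ i / g z) := by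
      cases i with
      | zero => simp
      | succ i => rw [pow_succ, mul_div_cancel_right₀ _ hgne]; simp
    have hlast : _root_.dirDeriv v (c (N + 1)) z = 0 := by
      rw [hcN (N + 1) (by omega), hzero]; rfl
    -- The derivatives of the coefficients, reindexed to range up to the new degree `N + 1`.
    have hsum : ∑ k ∈ Finset.range (N + 1), (i : ℂ) ^ k * _root_.dirDeriv v (c k) z
        = ∑ k ∈ Finset.range (N + 1), _root_.dirDeriv v (c (k + 1)) z * (i : ℂ) ^ (k + 1)
          + _root_.dirDeriv v (c 0) z := by
      have h := Finset.sum_range_succ'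
        (fun k => _root_.dirDeriv v (c k) z * (i : ℂ) ^ k) (N + 1)
      rw [Finset.sum_range_succ, hlast] at h
      simpa [mul_comm] using h
    have hD : _root_.dirDeriv v (F i) z
        = g z ^ i * ∑ k ∈ Finset.range (N + 1), (i : ℂ) ^ k * _root_.dirDeriv v (c k) z
          + (∑ k ∈ Finset.range (N + 1), c k z * (i : ℂ) ^ k)
            * ((i : ℂ) * g z ^ (i - 1) * _root_.dirDeriv v g z) := by
      simp only [_root_.dirDeriv]
      rw [hz, hP.fderiv]
      simp
    have hshift : ∑ k ∈ Finset.range (N + 1),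
          _root_.dirDeriv v g z / g z * c k z * (i : ℂ) ^ (k + 1)
        = _root_.dirDeriv v g z / g z * i * ∑ k ∈ Finset.range (N + 1), c k z * (i : ℂ) ^ k := by
      rw [Finset.mul_sum]
      exact Finset.sum_congr rfl fun k _ => by ring
    refine Eq.trans ?_ (congrArg (g z ^ i * ·) (Finset.sum_range_succ' _ (N + 1)).symm)
    rw [hD, hsum, hpow]
    simp only [add_mul, Finset.sum_add_distrib, hshift]
    ring

lemma PowForm.dirDeriv_iterate {g : ℂ × ℂ → ℂ} {z₀ : ℂ × ℂ} {N : ℕ} {F : ℕ → ℂ × ℂ → ℂ}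
    (hF : PowForm g z₀ N F) (hg : AnalyticAt ℂ g z₀) (h0 : g z₀ ≠ 0) {v : ℂ × ℂ}
    (hv : _root_.dirDeriv v g z₀ ≠ 0) (n : ℕ) :
    PowForm g z₀ (N + n) (fun i => (_root_.dirDeriv v)^[n] (F i)) := by
  induction n with
  | zero => exact hF
  | succ n ih =>
    simp only [Function.iterate_succ_apply']
    exact ih.dirDeriv hg h0 hv

lemma PowForm.pow (g : ℂ × ℂ → ℂ) (z₀ : ℂ × ℂ) : PowForm g z₀ 0 (fun i z => g z ^ i) := by
  refine ⟨fun k => if k = 0 then 1 else 0, fun k => ?_, fun k hk => if_neg (by omega), by simp,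
    fun i => by simp⟩
  dsimp only
  split_ifs
  · exact analyticAt_const
  · exact analyticAt_const

/-- If `g : ℂ × ℂ → ℂ` is analytic near `(a,b)` with `g (a,b) ≠ 0, 1`,
`g^{(1,0)}(a,b) ≠ 0` and `g^{(0,1)}(a,b) ≠ 0`, then for all `m, n` there is a
polynomial `p` of degree exactly `m + n` with
`∂_x^m ∂_y^n (g(x,y))^i |_{(a,b)} = (g (a,b))^i * p(i)` for all `i > m + n`. -/
theorem mixed_deriv_of_power_is_poly
    (a b : ℂ) (g : ℂ × ℂ → ℂ) (hg : AnalyticAt ℂ g (a, b))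
    (h0 : g (a, b) ≠ 0) (h1 : g (a, b) ≠ 1)
    (h10 : deriv (fun x => g (x, b)) a ≠ 0)
    (h01 : deriv (fun y => g (a, y)) b ≠ 0) (m n : ℕ) :
    ∃ p : Polynomial ℂ, p.degree = (m + n : ℕ) ∧
      ∀ i : ℕ, m + n < i →
        iteratedDeriv m (fun x => iteratedDeriv n (fun y => (g (x, y)) ^ i) b) a
          = (g (a, b)) ^ i * p.eval (i : ℂ) := by
  have hlx : ∀ y t : ℂ, HasDerivAt (fun x : ℂ => (x, y)) ((1, 0) : ℂ × ℂ) t := fun y t =>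
    (hasDerivAt_id t).prodMk (hasDerivAt_const t y)
  have hly : ∀ x t : ℂ, HasDerivAt (fun y : ℂ => (x, y)) ((0, 1) : ℂ × ℂ) t := fun x t =>
    (hasDerivAt_const t x).prodMk (hasDerivAt_id t)
  have hvx : dirDeriv (1, 0) g (a, b) ≠ 0 := by
    have h := iteratedDeriv_comp_line (hlx b) hg 1
    rw [iteratedDeriv_one] at h
    exact fun h' => h10 (h.trans h')
  have hvy : dirDeriv (0, 1) g (a, b) ≠ 0 := by
    have h := iteratedDeriv_comp_line (hly a) hg 1
    rw [iteratedDeriv_one] at h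
    exact fun h' => h01 (h.trans h')
  obtain ⟨c, -, -, hne, hF⟩ :=
    ((PowForm.pow g (a, b)).dirDeriv_iterate hg h0 hvy n).dirDeriv_iterate hg h0 hvx m
  have hN : 0 + n + m = m + n := by omega
  rw [hN] at hne hF
  refine ⟨∑ k ∈ Finset.range (m + n + 1), C (c k (a, b)) * X ^ k, ?_, fun i _ => ?_⟩
  · apply degree_eq_of_le_of_coeff_ne_zero
    · refine (degree_sum_le _ _).trans (Finset.sup_le fun k hk => ?_)
      refine (degree_C_mul_X_pow_le _ _).trans ?_
      exact_mod_cast Nat.lt_succ_iff.1 (Finset.mem_range.1 hk)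
    · simpa [finsetSum_coeff, coeff_C_mul, coeff_X_pow] using hne
  · have hgi : AnalyticAt ℂ (fun z => g z ^ i) (a, b) := hg.fun_pow i
    have hinner : (fun x => iteratedDeriv n (fun y => g (x, y) ^ i) b) =ᶠ[nhds a]
        fun x => (dirDeriv (0, 1))^[n] (fun z => g z ^ i) (x, b) := by
      filter_upwards [(hlx b a).continuousAt.eventually hgi.eventually_analyticAt] with x hx
      exact iteratedDeriv_comp_line (hly x) hx n
    rw [hinner.iteratedDeriv_eq, iteratedDeriv_comp_line (hlx b) (hgi.dirDeriv_iterate _ n) m]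
    refine (hF i).eq_of_nhds.trans ?_
    simp [eval_finsetSum]
end

section
/- Let (a,b) ∈ ℂ², let g : ℂ × ℂ → ℂ be analytic on a neighborhood of (a,b), and assume g(a,b) ≠ 0, g(a,b) ≠ 1, g^{(1,0)}(a,b) ≠ 0 and g^{(0,1)}(a,b) ≠ 0. Then for all m, n ∈ ℕ there is no polynomial q ∈ ℂ[X] and no N ∈ ℕ such that for all natural numbers i ≥ N, the mixed partial derivative of order (m,n) at (a,b) of the function (x,y) ↦ (g(x,y))^i equals q(i). -/
/-!
Write `∂` for differentiation in a fixed direction. Near `(a, b)`, where `g ≠ 0`,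
`∂ (g ^ i * c * i ^ j) = g ^ i * ((∂g / g) * c * i ^ (j + 1) + ∂c * i ^ j)`.
So each derivative of `g ^ i` is `g ^ i` times a polynomial in `i` with analytic coefficients
(`PowPolyForm`), and a differentiation raises the degree by one and multiplies the top coefficient
by `∂g / g` (`PowPolyForm.lineDeriv`). As both first partial derivatives of `g` are nonzero at
`(a, b)`, the sequence in question is `g (a, b) ^ i * P(i)` with a nonzero polynomial `P`.

Such a sequence agrees eventually with a polynomial `q(i)` only if `g (a, b) = 1`
(`geom_mul_poly_ne_poly`): eliminating the powers from two consecutive terms gives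
`c q(X) P(X + 1) = q(X + 1) P(X)`, and comparing leading coefficients forces `c = 1`.
-/

open Polynomial

/-- The sequence of functions `G i` has, near `p`, the form `g ^ i * ∑ j ≤ d, c j * i ^ j` with
analytic coefficients `c j` not depending on `i`, and `c d` does not vanish at `p`. The
coefficients are indexed by all of `ℕ` and vanish beyond `d`. -/
def PowPolyForm (g : ℂ × ℂ → ℂ) (p : ℂ × ℂ) (d : ℕ) (G : ℕ → ℂ × ℂ → ℂ) : Prop :=
  ∃ c : ℕ → ℂ × ℂ → ℂ, (∀ j, AnalyticAt ℂ (c j) p) ∧ (∀ j, d < j → c j = 0) ∧ c d p ≠ 0 ∧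
    ∀ᶠ z in nhds p, ∀ i : ℕ, G i z = g z ^ i * ∑ j ∈ Finset.range (d + 1), c j z * (i : ℂ) ^ j

theorem PowPolyForm.lineDeriv {g : ℂ × ℂ → ℂ} {p : ℂ × ℂ} {d : ℕ} {G : ℕ → ℂ × ℂ → ℂ}
    (hG : PowPolyForm g p d G) (hg : AnalyticAt ℂ g p) (h0 : g p ≠ 0) {v : ℂ × ℂ}
    (hv : _root_.lineDeriv ℂ g p v ≠ 0) :
    PowPolyForm g p (d + 1) (fun i z => _root_.lineDeriv ℂ (G i) z v) := by
  obtain ⟨c, hc, hcd, hcp, hform⟩ := hG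
  have hD : ∀ f : ℂ × ℂ → ℂ, AnalyticAt ℂ f p → AnalyticAt ℂ (fun z => fderiv ℂ f z v) p :=
    fun f hf =>
      ((ContinuousLinearMap.apply ℂ ℂ v).analyticAt _).fun_comp hf.fderiv
  have hgv : fderiv ℂ g p v ≠ 0 := by
    rwa [hg.differentiableAt.lineDeriv_eq_fderiv] at hv
  refine ⟨fun j z => (match j with
      | 0 => 0
      | k + 1 => fderiv ℂ g z v / g z * c k z) + fderiv ℂ (c j) z v, ?_, ?_, ?_, ?_⟩
  · rintro (_ | k)
    · exact analyticAt_const.add (hD _ (hc 0))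
    · exact (((hD _ hg).div hg h0).mul (hc k)).add (hD _ (hc (k + 1)))
  · rintro (_ | k) hk
    · omega
    · funext z
      simp [hcd k (by omega), hcd (k + 1) (by omega)]
  · simp only [hcd (d + 1) (by omega), fderiv_zero]
    simpa using ⟨⟨hgv, h0⟩, hcp⟩
  · have hcdiff : ∀ᶠ z in nhds p, ∀ j ∈ Finset.range (d + 1), AnalyticAt ℂ (c j) z :=
      (Filter.eventually_all_finset _).2 fun j _ => (hc j).eventually_analyticAt
    filter_upwards [hform.eventually_nhds, hg.eventually_analyticAt, hcdiff,
      hg.continuousAt.eventually_ne h0] with z hz hgz hcz hz0 i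
    have hGi : G i =ᶠ[nhds z]
        fun w => g w ^ i * ∑ j ∈ Finset.range (d + 1), c j w * (i : ℂ) ^ j :=
      hz.mono fun w hw => hw i
    rw [hGi.lineDeriv_eq]
    have hs : HasFDerivAt (fun w => ∑ j ∈ Finset.range (d + 1), c j w * (i : ℂ) ^ j)
        (∑ j ∈ Finset.range (d + 1), (i : ℂ) ^ j • fderiv ℂ (c j) z) z :=
      HasFDerivAt.fun_sum fun j hj => (hcz j hj).differentiableAt.hasFDerivAt.mul_const _
    have hpow := hgz.differentiableAt.hasFDerivAt.pow i
    have htot := (hpow.mul hs).hasLineDerivAt v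
    refine (HasLineDerivAt.lineDeriv htot).trans ?_
    -- At `i = 0` the truncated exponent `i - 1` is harmless, since the factor `i` vanishes.
    have hi : (i : ℂ) * g z ^ (i - 1) = g z ^ i * (i / g z) := by
      rcases i with _ | i
      · simp
      · simp only [Nat.add_sub_cancel]
        field_simp
        ring
    simp only [add_mul, Finset.sum_add_distrib]
    rw [Finset.sum_range_succ' (fun j => (match j with
      | 0 => 0
      | k + 1 => fderiv ℂ g z v / g z * c k z) * (i : ℂ) ^ j),
      Finset.sum_range_succ (fun j => fderiv ℂ (c j) z v * (i : ℂ) ^ j),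
      hcd (d + 1) (by omega)]
    simp only [_root_.add_apply, _root_.smul_apply,
      _root_.sum_apply, smul_eq_mul, nsmul_eq_mul, fderiv_zero]
    simp only [hi, Pi.zero_apply, _root_.zero_apply, zero_mul, add_zero]
    rw [mul_add, add_comm]
    congr 1
    · simp only [Finset.mul_sum, Finset.sum_mul]
      refine Finset.sum_congr rfl fun j _ => ?_
      ring
    · simp only [mul_comm]

theorem lineDeriv_fst (F : ℂ × ℂ → ℂ) (z : ℂ × ℂ) :
    lineDeriv ℂ F z (1, 0) = deriv (fun x => F (x, z.2)) z.1 := by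
  have := deriv_comp_const_add (f := fun x => F (x, z.2)) z.1 0
  simpa [lineDeriv, Prod.add_def] using this

theorem lineDeriv_snd (F : ℂ × ℂ → ℂ) (z : ℂ × ℂ) :
    lineDeriv ℂ F z (0, 1) = deriv (fun y => F (z.1, y)) z.2 := by
  have := deriv_comp_const_add (f := fun y => F (z.1, y)) z.2 0
  simpa [lineDeriv, Prod.add_def] using this

theorem geom_mul_poly_ne_poly {c : ℂ} (h0 : c ≠ 0) (h1 : c ≠ 1) {P q : ℂ[X]} (hP : P ≠ 0)
    (N : ℕ) (h : ∀ i : ℕ, N ≤ i → c ^ i * P.eval (i : ℂ) = q.eval (i : ℂ)) : False := by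
  have key : ∀ R S : ℂ[X], (∀ i : ℕ, N ≤ i → R.eval (i : ℂ) = S.eval (i : ℂ)) → R = S := by
    intro R S hRS
    refine Polynomial.eq_of_infinite_eval_eq R S ?_
    refine ((Set.Ici_infinite N).image (Nat.cast_injective (R := ℂ)).injOn).mono ?_
    rintro _ ⟨i, hi, rfl⟩
    exact hRS i hi
  have hq : q ≠ 0 := by
    rintro rfl
    refine hP (key P 0 fun i hi => ?_)
    simpa [h0] using h i hi
  have hid : C c * (q * P.comp (X + C 1)) = q.comp (X + C 1) * P := by
    refine key _ _ fun i hi => ?_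
    have e1 := h i hi
    have e2 := h (i + 1) (by omega)
    push_cast at e2
    simp only [eval_mul, eval_C, eval_comp, eval_add, eval_X]
    rw [← e1, ← e2]
    ring
  have hlc := congrArg leadingCoeff hid
  have hdeg : (X + C (1 : ℂ)).natDegree ≠ 0 := by
    rw [natDegree_X_add_C]
    exact one_ne_zero
  simp only [leadingCoeff_mul, leadingCoeff_C, leadingCoeff_comp hdeg, leadingCoeff_X_add_C,
    one_pow, mul_one] at hlc
  exact h1 (mul_right_cancel₀
    (mul_ne_zero (leadingCoeff_ne_zero.2 hq) (leadingCoeff_ne_zero.2 hP)) (by rw [hlc, one_mul]))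

/-- If `g : ℂ × ℂ → ℂ` is analytic near `(a,b)` with `g (a,b) ≠ 0, 1`,
`g^{(1,0)}(a,b) ≠ 0` and `g^{(0,1)}(a,b) ≠ 0`, then for all `m, n` the sequence
`i ↦ ∂_x^m ∂_y^n (g(x,y))^i |_{(a,b)}` does not have polynomial growth. -/
theorem mixed_deriv_of_power_not_poly_growth
    (a b : ℂ) (g : ℂ × ℂ → ℂ) (hg : AnalyticAt ℂ g (a, b))
    (h0 : g (a, b) ≠ 0) (h1 : g (a, b) ≠ 1)
    (h10 : deriv (fun x => g (x, b)) a ≠ 0)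
    (h01 : deriv (fun y => g (a, y)) b ≠ 0) (m n : ℕ) :
    ¬ ∃ (q : Polynomial ℂ) (N : ℕ), ∀ i : ℕ, N ≤ i →
        iteratedDeriv m (fun x => iteratedDeriv n (fun y => (g (x, y)) ^ i) b) a
          = q.eval (i : ℂ) := by
  rintro ⟨q, N, hq⟩
  have hy : ∀ n : ℕ, PowPolyForm g (a, b) n
      (fun i z => iteratedDeriv n (fun y => g (z.1, y) ^ i) z.2) := by
    intro n
    induction n with
    | zero =>
      refine ⟨fun j => if j = 0 then 1 else 0, fun j => ?_, fun j hj => ?_, by simp, by simp⟩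
      · by_cases hj : j = 0
        · simp only [hj, if_true]
          exact analyticAt_const
        · simp only [hj, if_false]
          exact analyticAt_const
      · simp [hj.ne']
    | succ n ih =>
      have := ih.lineDeriv hg h0 (v := (0, 1)) (by rwa [lineDeriv_snd])
      simpa only [lineDeriv_snd, iteratedDeriv_succ] using this
  have hx : ∀ m : ℕ, PowPolyForm g (a, b) (n + m) (fun i z =>
      iteratedDeriv m (fun x => iteratedDeriv n (fun y => g (x, y) ^ i) z.2) z.1) := by
    intro m
    induction m with
    | zero => simpa only [iteratedDeriv_zero, add_zero] using hy n
    | succ m ih =>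
      have := ih.lineDeriv hg h0 (v := (1, 0)) (by rwa [lineDeriv_fst])
      simpa only [lineDeriv_fst, iteratedDeriv_succ, ← add_assoc] using this
  obtain ⟨c, -, -, hcp, hform⟩ := hx m
  have hP : (∑ j ∈ Finset.range (n + m + 1), C (c j (a, b)) * X ^ j : ℂ[X]) ≠ 0 := by
    intro h
    have := congrArg (fun r => coeff r (n + m)) h
    simp [coeff_C_mul, coeff_X_pow] at this
    exact hcp this
  refine geom_mul_poly_ne_poly (q := q) h0 h1 hP N fun i hi => ?_
  rw [← hq i hi]
  refine Eq.trans ?_ (hform.self_of_nhds i).symm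
  simp [eval_finsetSum]
end

section
/- Let (a,b) ∈ ℂ², let g : ℂ × ℂ → ℂ be analytic on a neighborhood of (a,b), and assume g(a,b) ≠ 0, g(a,b) ≠ 1, g^{(1,0)}(a,b) ≠ 0, g^{(0,1)}(a,b) = 0 and g^{(0,2)}(a,b) ≠ 0. Then for all m, n ∈ ℕ there is no polynomial q ∈ ℂ[X] and no N ∈ ℕ such that for all natural numbers i ≥ N, the mixed partial derivative of order (m,2n) at (a,b) of the function (x,y) ↦ (g(x,y))^i equals q(i). -/
open Polynomial

/-!
Put `c = g (a, b)`. The Taylor expansion at `(a, b)` is multiplicative on analytic functions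
(`taylorTwo_mul`), so the expansion of `g ^ i` is `c ^ i * (1 + f) ^ i`, where `f` is a power series
in `X = x - a`, `Y = y - b` without constant term. Give `X` weight `2` and `Y` weight `1`. The
hypotheses say that `f = α X + γ Y² + (terms of weight ≥ 3)` with `α, γ ≠ 0`. Hence the
coefficient of `X ^ m * Y ^ (2 n)`, of weight `2 (m + n)`, vanishes in `f ^ k` for `k > m + n` and
equals `(m + n).choose m * α ^ m * γ ^ n` for `k = m + n` (`coeff_pow_top`). Expanding `(1 + f) ^ i`
by the binomial theorem, the derivative in question is `c ^ i * P(i)` with `P` a polynomial whose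
coefficient in degree `m + n` is nonzero.

If `c ^ i * P(i) = q(i)` for all large `i`, then `c * P(X + 1) * q(X) = q(X + 1) * P(X)`, and
comparing leading coefficients gives `c = 1` (`eq_one_of_pow_mul_eval_eq`).
-/

/-! ### Taylor expansions in one and two variables -/

/-- The formal Taylor expansion of `f` at `a`. -/
noncomputable def taylorOne (a : ℂ) (f : ℂ → ℂ) : PowerSeries ℂ :=
  PowerSeries.mk fun m => iteratedDeriv m f a / (m.factorial : ℂ)

/-- The formal Taylor expansion of `g` at `(a, b)`, as a power series in `y - b` whose coefficients
are power series in `x - a`. -/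
noncomputable def taylorTwo (a b : ℂ) (g : ℂ × ℂ → ℂ) : PowerSeries (PowerSeries ℂ) :=
  PowerSeries.mk fun k =>
    taylorOne a fun x => PowerSeries.coeff k (taylorOne b fun y => g (x, y))

lemma taylorOne_mul {a : ℂ} {f g : ℂ → ℂ} (hf : AnalyticAt ℂ f a) (hg : AnalyticAt ℂ g a) :
    taylorOne a (fun x => f x * g x) = taylorOne a f * taylorOne a g := by
  ext m
  rw [PowerSeries.coeff_mul, Finset.Nat.sum_antidiagonal_eq_sum_range_succ_mk]
  simp only [taylorOne, PowerSeries.coeff_mk]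
  rw [iteratedDeriv_fun_mul hf.contDiffAt hg.contDiffAt, Finset.sum_div]
  refine Finset.sum_congr rfl fun i hi => ?_
  have him : i ≤ m := Nat.lt_succ_iff.mp (Finset.mem_range.mp hi)
  have h1 : (m.factorial : ℂ) ≠ 0 := by exact_mod_cast m.factorial_ne_zero
  have h2 : (i.factorial : ℂ) ≠ 0 := by exact_mod_cast i.factorial_ne_zero
  have h3 : ((m - i).factorial : ℂ) ≠ 0 := by exact_mod_cast (m - i).factorial_ne_zero
  rw [Nat.cast_choose ℂ him]
  field_simp

lemma taylorOne_sum {ι : Type*} {a : ℂ} (s : Finset ι) {f : ι → ℂ → ℂ}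
    (hf : ∀ i ∈ s, AnalyticAt ℂ (f i) a) :
    taylorOne a (fun x => ∑ i ∈ s, f i x) = ∑ i ∈ s, taylorOne a (f i) := by
  ext m
  simp only [taylorOne, PowerSeries.coeff_mk, map_sum]
  rw [iteratedDeriv_fun_sum fun i hi => (hf i hi).contDiffAt, Finset.sum_div]

lemma taylorOne_congr {a : ℂ} {f g : ℂ → ℂ} (h : f =ᶠ[nhds a] g) :
    taylorOne a f = taylorOne a g := by
  ext m
  simp only [taylorOne, PowerSeries.coeff_mk]
  rw [h.iteratedDeriv_eq m]

/-- The `y`-derivatives of an analytic function of two variables are jointly analytic: near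
`(a, b)` each one is a directional derivative of the preceding one. -/
lemma analyticAt_iteratedDeriv_snd {a b : ℂ} {g : ℂ × ℂ → ℂ} (hg : AnalyticAt ℂ g (a, b)) (k : ℕ) :
    AnalyticAt ℂ (fun p : ℂ × ℂ => iteratedDeriv k (fun y => g (p.1, y)) p.2) (a, b) := by
  induction k with
  | zero => simpa using hg
  | succ k ih =>
    have h1 := ((ContinuousLinearMap.apply ℂ ℂ ((0, 1) : ℂ × ℂ)).analyticAt _).comp ih.fderiv
    refine h1.congr ?_
    filter_upwards [ih.eventually_analyticAt] with p hp
    rw [iteratedDeriv_succ]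
    have h2 : HasDerivAt (fun y : ℂ => (p.1, y)) ((0, 1) : ℂ × ℂ) p.2 :=
      (hasDerivAt_const _ _).prodMk (hasDerivAt_id _)
    have h3 := hp.differentiableAt.hasFDerivAt
    exact (HasFDerivAt.comp_hasDerivAt (f := fun y : ℂ => (p.1, y)) p.2 h3 h2).deriv.symm

lemma analyticAt_coeff_taylorOne {a b : ℂ} {g : ℂ × ℂ → ℂ} (hg : AnalyticAt ℂ g (a, b)) (k : ℕ) :
    AnalyticAt ℂ (fun x => PowerSeries.coeff k (taylorOne b fun y => g (x, y))) a := by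
  simp only [taylorOne, PowerSeries.coeff_mk]
  exact (analyticAt_iteratedDeriv_snd hg k).curry_left.div_const

lemma taylorTwo_mul {a b : ℂ} {g h : ℂ × ℂ → ℂ} (hg : AnalyticAt ℂ g (a, b))
    (hh : AnalyticAt ℂ h (a, b)) :
    taylorTwo a b (fun p => g p * h p) = taylorTwo a b g * taylorTwo a b h := by
  ext1 k
  rw [PowerSeries.coeff_mul]
  simp only [taylorTwo, PowerSeries.coeff_mk]
  have hcont : Filter.Tendsto (fun x : ℂ => (x, b)) (nhds a) (nhds (a, b)) :=
    (Continuous.prodMk_left b).tendsto a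
  have hev : (fun x => PowerSeries.coeff k (taylorOne b fun y => g (x, y) * h (x, y)))
      =ᶠ[nhds a] fun x => ∑ p ∈ Finset.HasAntidiagonal.antidiagonal k,
        PowerSeries.coeff p.1 (taylorOne b fun y => g (x, y)) *
          PowerSeries.coeff p.2 (taylorOne b fun y => h (x, y)) := by
    filter_upwards [hcont.eventually hg.eventually_analyticAt,
      hcont.eventually hh.eventually_analyticAt] with x hx hx'
    rw [taylorOne_mul hx.curry_right hx'.curry_right, PowerSeries.coeff_mul]
  rw [taylorOne_congr hev, taylorOne_sum]
  · exact Finset.sum_congr rfl fun p _ => taylorOne_mul (analyticAt_coeff_taylorOne hg _)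
      (analyticAt_coeff_taylorOne hh _)
  · exact fun p _ => (analyticAt_coeff_taylorOne hg _).mul (analyticAt_coeff_taylorOne hh _)

lemma coeff_coeff_taylorTwo (a b : ℂ) (g : ℂ × ℂ → ℂ) (m k : ℕ) :
    PowerSeries.coeff m (PowerSeries.coeff k (taylorTwo a b g)) =
      iteratedDeriv m (fun x => iteratedDeriv k (fun y => g (x, y)) b) a /
        (k.factorial : ℂ) / (m.factorial : ℂ) := by
  simp [taylorTwo, taylorOne]

lemma taylorTwo_one (a b : ℂ) : taylorTwo a b (fun _ => 1) = 1 := by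
  ext k m
  rw [coeff_coeff_taylorTwo, PowerSeries.coeff_one]
  rcases Nat.eq_zero_or_pos k with rfl | hk
  · rcases Nat.eq_zero_or_pos m with rfl | hm
    · simp
    · simp [iteratedDeriv_const, PowerSeries.coeff_one, hm.ne']
  · simp [iteratedDeriv_const, hk.ne']

lemma taylorTwo_pow {a b : ℂ} {g : ℂ × ℂ → ℂ} (hg : AnalyticAt ℂ g (a, b)) (i : ℕ) :
    taylorTwo a b (fun p => g p ^ i) = taylorTwo a b g ^ i := by
  induction i with
  | zero => simpa using taylorTwo_one a b
  | succ i ih =>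
    simp only [pow_succ]
    rw [taylorTwo_mul (hg.fun_pow i) hg, ih]

/-! ### Weighted order -/

/-- `F` has weighted order at least `d`, where the inner variable has weight `2` and the outer
variable has weight `1`. -/
def WeightGE (d : ℕ) (F : PowerSeries (PowerSeries ℂ)) : Prop :=
  ∀ p q : ℕ, 2 * p + q < d → PowerSeries.coeff p (PowerSeries.coeff q F) = 0

lemma WeightGE.mono {d e : ℕ} {F : PowerSeries (PowerSeries ℂ)} (hF : WeightGE e F) (h : d ≤ e) :
    WeightGE d F := fun p q hpq => hF p q (by omega)

lemma WeightGE.add {d : ℕ} {F G : PowerSeries (PowerSeries ℂ)} (hF : WeightGE d F)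
    (hG : WeightGE d G) : WeightGE d (F + G) := fun p q hpq => by
  simp [hF p q hpq, hG p q hpq]

lemma WeightGE.mul {d e : ℕ} {F G : PowerSeries (PowerSeries ℂ)} (hF : WeightGE d F)
    (hG : WeightGE e G) : WeightGE (d + e) (F * G) := by
  intro p q hpq
  rw [PowerSeries.coeff_mul, map_sum]
  refine Finset.sum_eq_zero fun r hr => ?_
  rw [PowerSeries.coeff_mul]
  refine Finset.sum_eq_zero fun s hs => ?_
  rw [Finset.HasAntidiagonal.mem_antidiagonal] at hr hs
  by_cases h : 2 * s.1 + r.1 < d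
  · rw [hF _ _ h, zero_mul]
  · rw [hG s.2 r.2 (by omega), mul_zero]

lemma WeightGE.pow {d : ℕ} {F : PowerSeries (PowerSeries ℂ)} (hF : WeightGE d F) (k : ℕ) :
    WeightGE (d * k) (F ^ k) := by
  induction k with
  | zero => intro p q h; omega
  | succ k ih => rw [pow_succ, Nat.mul_succ]; exact ih.mul hF

/-- The weighted-homogeneous series `α X + γ Y²`, with `X` the inner and `Y` the outer variable. -/
noncomputable def leadForm (α γ : ℂ) : PowerSeries (PowerSeries ℂ) :=
  PowerSeries.C (PowerSeries.C α * PowerSeries.X) +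
    PowerSeries.C (PowerSeries.C γ) * PowerSeries.X ^ 2

lemma coeff_coeff_leadForm (α γ : ℂ) (p q : ℕ) :
    PowerSeries.coeff p (PowerSeries.coeff q (leadForm α γ)) =
      (if q = 0 ∧ p = 1 then α else 0) + if q = 2 ∧ p = 0 then γ else 0 := by
  rw [leadForm, map_add, map_add, PowerSeries.coeff_C, PowerSeries.coeff_C_mul,
    PowerSeries.coeff_X_pow]
  congr 1
  · by_cases hq : q = 0 <;> simp [hq, PowerSeries.coeff_X]
  · by_cases hq : q = 2 <;> simp [hq, PowerSeries.coeff_C]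

lemma weightGE_leadForm (α γ : ℂ) : WeightGE 2 (leadForm α γ) := by
  intro p q hpq
  rw [coeff_coeff_leadForm, if_neg (by omega), if_neg (by omega), add_zero]

lemma coeff_leadForm_pow (α γ : ℂ) (m n : ℕ) :
    PowerSeries.coeff m (PowerSeries.coeff (2 * n) (leadForm α γ ^ (m + n))) =
      (m + n).choose m * α ^ m * γ ^ n := by
  have hterm : ∀ k j N : ℕ,
      (PowerSeries.C (PowerSeries.C α * PowerSeries.X) : PowerSeries (PowerSeries ℂ)) ^ k *
        (PowerSeries.C (PowerSeries.C γ) * PowerSeries.X ^ 2) ^ j * (N : PowerSeries (PowerSeries ℂ))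
      = PowerSeries.C (PowerSeries.C (N * α ^ k * γ ^ j) * PowerSeries.X ^ k) *
          PowerSeries.X ^ (2 * j) := by
    intro k j N
    simp only [map_mul, map_pow, map_natCast]
    ring
  rw [leadForm, add_pow, map_sum, map_sum, Finset.sum_eq_single m]
  · rw [hterm, PowerSeries.coeff_C_mul, PowerSeries.coeff_X_pow, if_pos (by omega), mul_one,
      PowerSeries.coeff_C_mul, PowerSeries.coeff_X_pow, if_pos rfl, mul_one, Nat.add_sub_cancel_left]
  · intro k hk hkm
    rw [hterm, PowerSeries.coeff_C_mul, PowerSeries.coeff_X_pow]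
    have : k < m + n + 1 := Finset.mem_range.mp hk
    rw [if_neg (by omega)]
    simp
  · intro h
    exact absurd (Finset.mem_range.mpr (by omega)) h

lemma weightGE_pow_sub_pow {F L : PowerSeries (PowerSeries ℂ)} (hF : WeightGE 2 F)
    (hL : WeightGE 2 L) (hFL : WeightGE 3 (F - L)) (k : ℕ) :
    WeightGE (2 * k + 1) (F ^ k - L ^ k) := by
  induction k with
  | zero => intro p q _; simp
  | succ k ih =>
    have h : F ^ (k + 1) - L ^ (k + 1) = F ^ k * (F - L) + (F ^ k - L ^ k) * L := by ring
    rw [h]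
    exact (((hF.pow k).mul hFL).mono (by omega)).add ((ih.mul hL).mono (by omega))

lemma coeff_pow_top {F : PowerSeries (PowerSeries ℂ)} {α γ : ℂ}
    (hF : WeightGE 3 (F - leadForm α γ)) (m n : ℕ) :
    PowerSeries.coeff m (PowerSeries.coeff (2 * n) (F ^ (m + n))) =
      (m + n).choose m * α ^ m * γ ^ n := by
  have hL := weightGE_leadForm α γ
  have hF2 : WeightGE 2 F := by
    simpa using (hF.mono (by omega : 2 ≤ 3)).add hL
  have h := weightGE_pow_sub_pow hF2 hL hF (m + n) m (2 * n) (by omega)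
  rw [map_sub, map_sub, sub_eq_zero] at h
  rw [h, coeff_leadForm_pow]

/-! ### Polynomial growth -/

lemma eq_of_eventually_eval_natCast_eq {p q : ℂ[X]} {N : ℕ}
    (h : ∀ i : ℕ, N ≤ i → p.eval (i : ℂ) = q.eval (i : ℂ)) : p = q := by
  refine Polynomial.eq_of_infinite_eval_eq p q ?_
  refine ((Set.Ici_infinite N).image (f := fun i : ℕ => (i : ℂ))
    Nat.cast_injective.injOn).mono ?_
  rintro _ ⟨i, hi, rfl⟩
  exact h i hi

lemma eq_one_of_pow_mul_eval_eq {c : ℂ} (hc : c ≠ 0) {P q : ℂ[X]} (hP : P ≠ 0) {N : ℕ}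
    (h : ∀ i : ℕ, N ≤ i → c ^ i * P.eval (i : ℂ) = q.eval (i : ℂ)) : c = 1 := by
  have hq : q ≠ 0 := by
    rintro rfl
    refine hP (eq_of_eventually_eval_natCast_eq (N := N) fun i hi => ?_)
    simpa [hc] using h i hi
  have hid : C c * taylor 1 P * q = taylor 1 q * P := by
    refine eq_of_eventually_eval_natCast_eq (N := N) fun i hi => ?_
    have h1 := h i hi
    have h2 := h (i + 1) (by omega)
    push_cast at h2
    simp only [eval_mul, eval_C, taylor_eval]
    rw [← h1, ← h2]
    ring
  have hlc := congrArg leadingCoeff hid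
  simp only [leadingCoeff_mul, leadingCoeff_C, leadingCoeff_taylor] at hlc
  have hP' := leadingCoeff_ne_zero.mpr hP
  have hq' := leadingCoeff_ne_zero.mpr hq
  have hne : P.leadingCoeff * q.leadingCoeff ≠ 0 := mul_ne_zero hP' hq'
  apply mul_right_cancel₀ hne
  linear_combination hlc

/-- The binomial coefficients `i.choose k` are polynomial in `i` of degree exactly `k`, so a
combination of those with `k ≤ M` whose last coefficient is nonzero is a nonzero polynomial. -/
lemma exists_poly_sum_choose (A : ℕ → ℂ) (M : ℕ) (hA : A M ≠ 0) :
    ∃ P : ℂ[X], P ≠ 0 ∧ ∀ i : ℕ,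
      P.eval (i : ℂ) = ∑ k ∈ Finset.range (M + 1), A k * (i.choose k : ℂ) := by
  refine ⟨∑ k ∈ Finset.range (M + 1), C (A k / (k.factorial : ℂ)) * descPochhammer ℂ k, ?_, ?_⟩
  · intro h
    have h' := congrArg (fun p => coeff p M) h
    simp only [finsetSum_coeff, coeff_C_mul, coeff_zero] at h'
    rw [Finset.sum_range_succ, Finset.sum_eq_zero, zero_add] at h'
    · have hm : (descPochhammer ℂ M).coeff M = 1 := by
        have := (monic_descPochhammer ℂ M).coeff_natDegree
        rwa [descPochhammer_natDegree] at this
      rw [hm, mul_one, div_eq_zero_iff] at h'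
      rcases h' with h' | h'
      · exact hA h'
      · exact M.factorial_ne_zero (by exact_mod_cast h')
    · intro k hk
      rw [coeff_eq_zero_of_natDegree_lt, mul_zero]
      rw [descPochhammer_natDegree]
      exact Finset.mem_range.mp hk
  · intro i
    rw [eval_finsetSum]
    refine Finset.sum_congr rfl fun k _ => ?_
    have hk : (k.factorial : ℂ) ≠ 0 := by exact_mod_cast k.factorial_ne_zero
    rw [eval_mul, eval_C, descPochhammer_eval_eq_descFactorial,
      Nat.descFactorial_eq_factorial_mul_choose]
    push_cast
    field_simp

/-- If `g : ℂ × ℂ → ℂ` is analytic near `(a,b)` with `g (a,b) ≠ 0, 1`,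
`g^{(1,0)}(a,b) ≠ 0`, `g^{(0,1)}(a,b) = 0` and `g^{(0,2)}(a,b) ≠ 0`, then for all
`m, n` the sequence `i ↦ ∂_x^m ∂_y^{2n} (g(x,y))^i |_{(a,b)}` does not have
polynomial growth. -/
theorem mixed_even_deriv_of_power_not_poly_growth
    (a b : ℂ) (g : ℂ × ℂ → ℂ) (hg : AnalyticAt ℂ g (a, b))
    (h0 : g (a, b) ≠ 0) (h1 : g (a, b) ≠ 1)
    (h10 : deriv (fun x => g (x, b)) a ≠ 0)
    (h01 : deriv (fun y => g (a, y)) b = 0)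
    (h02 : iteratedDeriv 2 (fun y => g (a, y)) b ≠ 0) (m n : ℕ) :
    ¬ ∃ (q : Polynomial ℂ) (N : ℕ), ∀ i : ℕ, N ≤ i →
        iteratedDeriv m (fun x => iteratedDeriv (2 * n) (fun y => (g (x, y)) ^ i) b) a
          = q.eval (i : ℂ) := by
  rintro ⟨q, N, hq⟩
  set c := g (a, b) with hc
  set α := c⁻¹ * deriv (fun x => g (x, b)) a with hα
  set γ := c⁻¹ * (iteratedDeriv 2 (fun y => g (a, y)) b / 2) with hγ
  have hα0 : α ≠ 0 := mul_ne_zero (inv_ne_zero h0) h10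
  have hγ0 : γ ≠ 0 := mul_ne_zero (inv_ne_zero h0) (div_ne_zero h02 two_ne_zero)
  set F : PowerSeries (PowerSeries ℂ) :=
    PowerSeries.C (PowerSeries.C c⁻¹) * taylorTwo a b g - 1 with hF
  have hgF : taylorTwo a b g = PowerSeries.C (PowerSeries.C c) * (F + 1) := by
    rw [hF, sub_add_cancel, ← mul_assoc, ← map_mul, ← map_mul, mul_inv_cancel₀ h0]
    simp
  have hFcoeff : ∀ p k : ℕ, PowerSeries.coeff p (PowerSeries.coeff k F) =
      c⁻¹ * (iteratedDeriv p (fun x => iteratedDeriv k (fun y => g (x, y)) b) a /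
        (k.factorial : ℂ) / (p.factorial : ℂ)) - if k = 0 ∧ p = 0 then 1 else 0 := by
    intro p k
    rw [hF, map_sub, map_sub, PowerSeries.coeff_C_mul, PowerSeries.coeff_C_mul,
      coeff_coeff_taylorTwo, PowerSeries.coeff_one]
    by_cases hk : k = 0 <;> simp [hk, PowerSeries.coeff_one]
  have hlead : WeightGE 3 (F - leadForm α γ) := by
    intro p k hpk
    rw [map_sub, map_sub, hFcoeff, coeff_coeff_leadForm]
    -- The monomials of weight less than `3` are `1`, `Y`, `Y²` and `X`.
    obtain ⟨rfl, rfl⟩ | ⟨rfl, rfl⟩ | ⟨rfl, rfl⟩ | ⟨rfl, rfl⟩ :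
        (p = 0 ∧ k = 0) ∨ (p = 0 ∧ k = 1) ∨ (p = 0 ∧ k = 2) ∨ (p = 1 ∧ k = 0) := by omega
    · simp [← hc, h0]
    · simp [h01]
    · simp [hγ]
    · simp [hα]
  have hF2 : WeightGE 2 F := by
    simpa using (hlead.mono (by omega : 2 ≤ 3)).add (weightGE_leadForm α γ)
  set A : ℕ → ℂ := fun k => PowerSeries.coeff m (PowerSeries.coeff (2 * n) (F ^ k)) with hA
  have hAtop : A (m + n) ≠ 0 := by
    simp only [hA]
    rw [coeff_pow_top hlead]
    have : ((m + n).choose m : ℂ) ≠ 0 := by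
      exact_mod_cast (Nat.choose_pos (by omega)).ne'
    exact mul_ne_zero (mul_ne_zero this (pow_ne_zero _ hα0)) (pow_ne_zero _ hγ0)
  obtain ⟨P, hP0, hP⟩ := exists_poly_sum_choose A (m + n) hAtop
  have hfac : ((2 * n).factorial : ℂ) * (m.factorial : ℂ) ≠ 0 := by
    exact_mod_cast mul_ne_zero (Nat.factorial_ne_zero _) (Nat.factorial_ne_zero _)
  have hexp : ∀ i : ℕ, m + n ≤ i →
      iteratedDeriv m (fun x => iteratedDeriv (2 * n) (fun y => (g (x, y)) ^ i) b) a =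
        ((2 * n).factorial : ℂ) * (m.factorial : ℂ) * (c ^ i * P.eval (i : ℂ)) := by
    intro i hi
    have hT := coeff_coeff_taylorTwo a b (fun p => g p ^ i) m (2 * n)
    rw [taylorTwo_pow hg, hgF, mul_pow, ← map_pow, ← map_pow, PowerSeries.coeff_C_mul,
      PowerSeries.coeff_C_mul, add_pow, map_sum, map_sum] at hT
    rw [div_div, eq_div_iff hfac] at hT
    rw [← hT, hP i, mul_comm]
    congr 2
    have hterm : ∀ k : ℕ, PowerSeries.coeff m (PowerSeries.coeff (2 * n)
        (F ^ k * 1 ^ (i - k) * (i.choose k : PowerSeries (PowerSeries ℂ)))) =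
        A k * (i.choose k : ℂ) := by
      intro k
      have hcast : (i.choose k : PowerSeries (PowerSeries ℂ)) =
          PowerSeries.C (PowerSeries.C (i.choose k : ℂ)) := by simp
      rw [one_pow, mul_one, hcast, PowerSeries.coeff_mul_C, PowerSeries.coeff_mul_C]
    simp only [hterm]
    symm
    refine Finset.sum_subset (Finset.range_subset_range.mpr (by omega)) fun k _ hk => ?_
    -- For `k > m + n` the weight of `F ^ k` exceeds that of `X ^ m * Y ^ (2 n)`.
    have hk' : m + n < k := by
      rw [Finset.mem_range] at hk
      omega
    rw [hA]
    simp only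
    rw [hF2.pow k m (2 * n) (by omega), zero_mul]
  refine h1 (eq_one_of_pow_mul_eval_eq h0 hP0
    (q := C (((2 * n).factorial : ℂ) * (m.factorial : ℂ))⁻¹ * q) (N := max N (m + n))
    fun i hi => ?_)
  have e1 := hexp i (le_trans (le_max_right _ _) hi)
  rw [hq i (le_trans (le_max_left _ _) hi)] at e1
  rw [eval_mul, eval_C, e1, inv_mul_cancel_left₀ hfac]
end

section
/- Define f, h : ℂ \ {0} → ℂ by f(a) = −a^{−4} + 2a^{−2} and h(a) = a^{−2} − 1 + a^2, with derivatives f'(a) = 4a^{−5} − 4a^{−3} and h'(a) = −2a^{−3} + 2a. Then the set {a ∈ ℂ : a ≠ 0 and (f(a) = 0 or f(a) = 1 or f'(a) = 0)} ∩ {a ∈ ℂ : a ≠ 0 and (h(a) = 0 or h(a) = 1 or h'(a) = 0)} equals {1, −1}. -/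
/-!
With `s = a²` and `a ≠ 0`, clearing denominators turns the three trefoil conditions into
`2s = 1`, `(s - 1)² = 0` and `s = 1`, and the three figure-eight conditions into
`s² - s + 1 = 0`, `(s - 1)² = 0` and `s² = 1`. The value `s = 1/2` satisfies none of the
latter, so every common point has `s = 1`, that is `a = ±1`; conversely `s = 1` gives
`f(a) = h(a) = 1`.
-/

/-- The only solutions of the trefoil conditions are `a² = 1/2` and `a² = 1`. -/
lemma trefoil_sq {a : ℂ} (ha : a ≠ 0)
    (H : -a ^ (-4 : ℤ) + 2 * a ^ (-2 : ℤ) = 0 ∨ -a ^ (-4 : ℤ) + 2 * a ^ (-2 : ℤ) = 1 ∨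
      4 * a ^ (-5 : ℤ) - 4 * a ^ (-3 : ℤ) = 0) :
    2 * a ^ 2 = 1 ∨ a ^ 2 = 1 := by
  have hinv : a * a⁻¹ = 1 := mul_inv_cancel₀ ha
  have e (n : ℕ) : a ^ (-(n : ℤ)) = a⁻¹ ^ n := by rw [zpow_neg, zpow_natCast, inv_pow]
  have e2 := e 2
  have e3 := e 3
  have e4 := e 4
  have e5 := e 5
  push_cast at e2 e3 e4 e5
  rw [e2, e3, e4, e5] at H
  generalize a⁻¹ = b at *
  rcases H with H | H | H
  · left
    grind
  · right
    have h : (a ^ 2 - 1) ^ 2 = 0 := by grind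
    exact sub_eq_zero.mp (pow_eq_zero_iff two_ne_zero |>.mp h)
  · right
    grind

/-- The figure-eight conditions in terms of `a²`, with denominators cleared. -/
lemma figure_eight_sq {a : ℂ} (ha : a ≠ 0)
    (H : a ^ (-2 : ℤ) - 1 + a ^ 2 = 0 ∨ a ^ (-2 : ℤ) - 1 + a ^ 2 = 1 ∨
      -2 * a ^ (-3 : ℤ) + 2 * a = 0) :
    (a ^ 2) ^ 2 - a ^ 2 + 1 = 0 ∨ (a ^ 2 - 1) ^ 2 = 0 ∨ (a ^ 2) ^ 2 = 1 := by
  have hinv : a * a⁻¹ = 1 := mul_inv_cancel₀ ha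
  have e (n : ℕ) : a ^ (-(n : ℤ)) = a⁻¹ ^ n := by rw [zpow_neg, zpow_natCast, inv_pow]
  have e2 := e 2
  have e3 := e 3
  push_cast at e2 e3
  rw [e2, e3] at H
  generalize a⁻¹ = b at *
  rcases H with H | H | H
  · left
    grind
  · right; left
    grind
  · right; right
    grind

/-- The intersection of the exceptional sets `A_{3_1}` and `A_{4_1}` for the
constant terms of the HOMFLY polynomials of the trefoil and the figure-eight knot
is `{1, -1}`.  Here `f a = -a⁻⁴ + 2a⁻²`, `f' a = 4a⁻⁵ - 4a⁻³`,
`h a = a⁻² - 1 + a²`, `h' a = -2a⁻³ + 2a`. -/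
theorem trefoil_figure_eight_exceptional_sets_inter :
    ({a : ℂ | a ≠ 0 ∧ (-a ^ (-4 : ℤ) + 2 * a ^ (-2 : ℤ) = 0 ∨
        -a ^ (-4 : ℤ) + 2 * a ^ (-2 : ℤ) = 1 ∨
        4 * a ^ (-5 : ℤ) - 4 * a ^ (-3 : ℤ) = 0)} ∩
      {a : ℂ | a ≠ 0 ∧ (a ^ (-2 : ℤ) - 1 + a ^ 2 = 0 ∨
        a ^ (-2 : ℤ) - 1 + a ^ 2 = 1 ∨
        -2 * a ^ (-3 : ℤ) + 2 * a = 0)})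
    = {1, -1} := by
  ext a
  simp only [Set.mem_inter_iff, Set.mem_ofPred_eq, Set.mem_insert_iff, Set.mem_singleton_iff]
  constructor
  · rintro ⟨⟨ha, hf⟩, -, hh⟩
    rcases trefoil_sq ha hf with h | h
    -- `a² = 1/2` contradicts each of the figure-eight conditions.
    · exfalso
      have hs : a ^ 2 = 1 / 2 := by linear_combination h / 2
      have hsq := figure_eight_sq ha hh
      rw [hs] at hsq
      norm_num at hsq
    · simpa using h
  · rintro (rfl | rfl)
    · norm_num
    · refine ⟨⟨by norm_num, Or.inr (Or.inl ?_)⟩, by norm_num, Or.inr (Or.inl ?_)⟩ <;>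
        norm_num [zpow_neg]
end
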